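/- Simplicity of the principal eigenvalue: let 0 < γ < 2. Every function u that is C² on (0,1), positive on (0,1), continuous on (0,1] with u(1) = 0, and satisfies F(D(u''(r), u'(r)/r)) + λ̄'_γ(F)·u(r)·r^{−γ} = 0 for all r ∈ (0,1), is bounded on (0,1); and any two such functions u, v are proportional, i.e. there exists t > 0 with u = t·v on (0,1). -/

import Mathlib

open Set Real Filter MeasureTheory Matrix

noncomputable section

/-- The `N × N` diagonal matrix with first diagonal entry `a` and the remaining
`N - 1` diagonal entries equal to `b`. -/
def Dmat (N : ℕ) (a b : ℝ) : Matrix (Fin N) (Fin N) ℝ :=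
  Matrix.diagonal (fun i => if (i : ℕ) = 0 then a else b)

/-- Uniform ellipticity with constants `0 < lam ≤ Lam`. -/
def UnifElliptic (N : ℕ) (lam Lam : ℝ) (F : Matrix (Fin N) (Fin N) ℝ → ℝ) : Prop :=
  ∀ M P : Matrix (Fin N) (Fin N) ℝ, M.IsSymm → P.PosSemidef →
    lam * P.trace ≤ F (M + P) - F M ∧ F (M + P) - F M ≤ Lam * P.trace

/-- Rotation invariance. -/
def RotInvariant (N : ℕ) (F : Matrix (Fin N) (Fin N) ℝ → ℝ) : Prop :=
  ∀ O M : Matrix (Fin N) (Fin N) ℝ, Oᵀ * O = 1 → F (Oᵀ * M * O) = F M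

/-- Positive one-homogeneity. -/
def PosHomog (N : ℕ) (F : Matrix (Fin N) (Fin N) ℝ → ℝ) : Prop :=
  ∀ t : ℝ, 0 < t → ∀ M : Matrix (Fin N) (Fin N) ℝ, F (t • M) = t * F M

/-- The radial principal eigenvalue `λ̄'_γ(F)` on the punctured unit ball. -/
def radialEV (N : ℕ) (F : Matrix (Fin N) (Fin N) ℝ → ℝ) (γ : ℝ) : ℝ :=
  sSup {μ : ℝ | ∃ u : ℝ → ℝ, ContDiffOn ℝ 2 u (Ioo 0 1) ∧
    (∀ r ∈ Ioo (0:ℝ) 1, 0 < u r) ∧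
    (∀ r ∈ Ioo (0:ℝ) 1,
      F (Dmat N (deriv (deriv u) r) (deriv u r / r)) + μ * u r * r ^ (-γ) ≤ 0)}

/-!
In terms of `p = -r u' / u` the radial equation is the first-order equation
`f (-r p' + p + p², -p) = -μ r ^ (2 - γ)`. Near the origin its right-hand side is small, and
`Ñ₊ > 2` makes small positive constants barriers for it: if `p` exceeds a multiple of
`r ^ (2 - γ)` at one small radius, then `p` is bounded below by a positive constant on all of
`(0, 1)`. Multiplying such a `p` by a suitable factor `1 - exp (-A r ^ (2 - γ)) / 2` gives a
supersolution at a level larger than `μ`, which is impossible for the principal eigenvalue. So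
`p = O(r ^ (2 - γ))` from above, and integrating `-p / r = (log u)'` bounds `u`.

For the simplicity, ellipticity and homogeneity yield `|W'| ≤ C |W| / r` for the Wronskian
`W = u' v - u v'` of two solutions. As `W` vanishes at `r = 1`, it vanishes identically.
-/

/-- The radial form `f a b = F (Dmat N a b)` of a uniformly elliptic, positively one-homogeneous
operator `F`. The real number `n` stands for the multiplicity `N - 1` of the second argument. -/
structure RadiallyElliptic (f : ℝ → ℝ → ℝ) (lam Lam n : ℝ) : Prop where
  lam_pos : 0 < lam
  mult_pos : 0 < n
  elliptic : ∀ a b p q, 0 ≤ p → 0 ≤ q →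
    lam * (p + n * q) ≤ f (a + p) (b + q) - f a b ∧
      f (a + p) (b + q) - f a b ≤ Lam * (p + n * q)
  homogeneous : ∀ t a b, 0 < t → f (t * a) (t * b) = t * f a b

section Dmat

variable (N : ℕ) (a b p q t : ℝ)

theorem isSymm_Dmat : (Dmat N a b).IsSymm := by
  simp [Dmat, Matrix.IsSymm]

theorem Dmat_add_Dmat : Dmat N a b + Dmat N p q = Dmat N (a + p) (b + q) := by
  rw [Dmat, Dmat, Dmat, Matrix.diagonal_add]
  congr 1
  ext i
  split_ifs <;> rfl

theorem smul_Dmat : t • Dmat N a b = Dmat N (t * a) (t * b) := by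
  rw [Dmat, Dmat, ← Matrix.diagonal_smul]
  congr 1
  ext i
  simp only [Pi.smul_apply, smul_eq_mul, mul_ite]

variable {a b} in
theorem posSemidef_Dmat (ha : 0 ≤ a) (hb : 0 ≤ b) : (Dmat N a b).PosSemidef := by
  refine Matrix.PosSemidef.diagonal fun i => ?_
  rw [Pi.zero_apply]
  split_ifs <;> assumption

variable {N} in
theorem trace_Dmat (hN : N ≠ 0) : (Dmat N a b).trace = a + ((N : ℝ) - 1) * b := by
  obtain ⟨k, rfl⟩ := Nat.exists_eq_succ_of_ne_zero hN
  simp [Dmat, Matrix.trace, Fin.sum_univ_succ]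

end Dmat

theorem UnifElliptic.radiallyElliptic {N : ℕ} {lam Lam : ℝ} {F : Matrix (Fin N) (Fin N) ℝ → ℝ}
    (hF : UnifElliptic N lam Lam F) (hhom : PosHomog N F) (hN : 2 ≤ N) (hlam : 0 < lam) :
    RadiallyElliptic (fun a b => F (Dmat N a b)) lam Lam ((N : ℝ) - 1) where
  lam_pos := hlam
  mult_pos := sub_pos.2 (Nat.one_lt_cast.2 hN)
  elliptic a b p q hp hq := by
    have := hF (Dmat N a b) (Dmat N p q) (isSymm_Dmat N a b) (posSemidef_Dmat N hp hq)
    rwa [Dmat_add_Dmat, trace_Dmat p q (by omega)] at this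
  homogeneous t a b ht := by
    rw [← smul_Dmat, hhom t ht]

namespace RadiallyElliptic

variable {f : ℝ → ℝ → ℝ} {lam Lam n a a' b b' m y : ℝ}

theorem sub_fst (hf : RadiallyElliptic f lam Lam n) (b : ℝ) (h : a ≤ a') :
    lam * (a' - a) ≤ f a' b - f a b ∧ f a' b - f a b ≤ Lam * (a' - a) := by
  simpa using hf.elliptic a b (a' - a) 0 (sub_nonneg.2 h) le_rfl

theorem sub_snd (hf : RadiallyElliptic f lam Lam n) (a : ℝ) (h : b ≤ b') :
    lam * n * (b' - b) ≤ f a b' - f a b ∧ f a b' - f a b ≤ Lam * n * (b' - b) := by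
  simpa [mul_assoc] using hf.elliptic a b 0 (b' - b) le_rfl (sub_nonneg.2 h)

theorem apply_zero (hf : RadiallyElliptic f lam Lam n) : f 0 0 = 0 := by
  have := hf.homogeneous 2 0 0 two_pos
  rw [mul_zero] at this
  linarith

theorem lam_le_Lam (hf : RadiallyElliptic f lam Lam n) : lam ≤ Lam := by
  have := hf.sub_fst 0 zero_le_one
  linarith [this.1.trans this.2]

theorem Lam_pos (hf : RadiallyElliptic f lam Lam n) : 0 < Lam :=
  hf.lam_pos.trans_le hf.lam_le_Lam

theorem two_lt_div_mul_add_one_iff (hf : RadiallyElliptic f lam Lam n) :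
    2 < lam / Lam * n + 1 ↔ Lam < lam * n := by
  rw [← sub_lt_iff_lt_add, div_mul_eq_mul_div, lt_div_iff₀ hf.Lam_pos]
  norm_num

theorem mul_abs_sub_le_abs_sub_fst (hf : RadiallyElliptic f lam Lam n) (a a' b : ℝ) :
    lam * |a - a'| ≤ |f a b - f a' b| := by
  wlog h : a' ≤ a generalizing a a'
  · rw [abs_sub_comm a, abs_sub_comm (f a b)]
    exact this a' a (le_of_not_ge h)
  rw [abs_of_nonneg (sub_nonneg.2 h)]
  exact (hf.sub_fst b h).1.trans (le_abs_self _)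

theorem abs_sub_snd_le (hf : RadiallyElliptic f lam Lam n) (a b b' : ℝ) :
    |f a b - f a b'| ≤ Lam * n * |b - b'| := by
  wlog h : b' ≤ b generalizing b b'
  · rw [abs_sub_comm b, abs_sub_comm (f a b)]
    exact this b' b (le_of_not_ge h)
  have hmono := hf.sub_snd a h
  have hnonneg : 0 ≤ lam * n * (b - b') :=
    mul_nonneg (mul_pos hf.lam_pos hf.mult_pos).le (sub_nonneg.2 h)
  rw [abs_of_nonneg (sub_nonneg.2 h), abs_of_nonneg (hnonneg.trans hmono.1)]
  exact hmono.2

theorem mul_abs_sub_le (hf : RadiallyElliptic f lam Lam n) (a a' b b' : ℝ) :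
    lam * |a - a'| ≤ |f a b - f a' b'| + Lam * n * |b - b'| := by
  have hsplit := abs_sub_le (f a b) (f a' b') (f a' b)
  rw [abs_sub_comm (f a' b')] at hsplit
  linarith [hf.mul_abs_sub_le_abs_sub_fst a a' b, hf.abs_sub_snd_le a' b b']

theorem fst_le (hf : RadiallyElliptic f lam Lam n) (hy : 0 ≤ y) (h : f a b ≤ -y) :
    a ≤ Lam * n / lam * |b| - y / Lam := by
  have hlam := hf.lam_pos
  have hLam := hf.Lam_pos
  have hX : 0 ≤ Lam * n * |b| := mul_nonneg (mul_pos hLam hf.mult_pos).le (abs_nonneg b)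
  have h0 : -(Lam * n * |b|) ≤ f 0 b := by
    have := hf.abs_sub_snd_le 0 b 0
    rw [hf.apply_zero, sub_zero, sub_zero] at this
    exact (abs_le.1 this).1
  rw [div_mul_eq_mul_div]
  rcases le_total a 0 with ha | ha
  · have hle : a ≤ (Lam * n * |b| - y) / Lam := by
      rw [le_div_iff₀ hLam]
      linarith [(hf.sub_fst b ha).2]
    rw [sub_div] at hle
    linarith [div_le_div_of_nonneg_left hX hlam hf.lam_le_Lam]
  · have hle : a ≤ (Lam * n * |b| - y) / lam := by
      rw [le_div_iff₀ hlam]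
      linarith [(hf.sub_fst b ha).1]
    rw [sub_div] at hle
    linarith [div_le_div_of_nonneg_left hy hlam hf.lam_le_Lam]

theorem apply_add_sq_neg_le (hf : RadiallyElliptic f lam Lam n) (hm : 0 ≤ m) :
    f (m + m ^ 2) (-m) ≤ m * (Lam * (1 + m) - lam * n) := by
  have hfst := (hf.sub_fst (-m) (by positivity : 0 ≤ m + m ^ 2)).2
  have hsnd := (hf.sub_snd 0 (neg_nonpos.2 hm)).1
  rw [hf.apply_zero] at hsnd
  linarith

theorem neg_mul_le_apply_neg (hf : RadiallyElliptic f lam Lam n) (ha : 0 ≤ a) (hm : 0 ≤ m) :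
    -(Lam * n * m) ≤ f a (-m) := by
  have hfst := (hf.sub_fst (-m) ha).1
  have hsnd := (hf.sub_snd 0 (neg_nonpos.2 hm)).2
  rw [hf.apply_zero] at hsnd
  linarith [mul_nonneg hf.lam_pos.le (sub_nonneg.2 ha)]

end RadiallyElliptic

section Calculus

theorem exists_forall_hasDerivAt_of_continuousOn {s : Set ℝ} {g : ℝ → ℝ} (hs : IsOpen s)
    (hconn : s.OrdConnected) (hg : ContinuousOn g s) :
    ∃ G : ℝ → ℝ, ∀ x ∈ s, HasDerivAt G (g x) x := by
  rcases s.eq_empty_or_nonempty with rfl | ⟨c, hc⟩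
  · exact ⟨0, fun x hx => hx.elim⟩
  refine ⟨fun x => ∫ t in c..x, g t, fun x hx => ?_⟩
  exact intervalIntegral.integral_hasDerivAt_right
    (hg.mono (hconn.uIcc_subset hc hx)).intervalIntegrable
    (hg.stronglyMeasurableAtFilter hs x hx) (hg.continuousAt (hs.mem_nhds hx))

variable {a b c m K : ℝ} {p : ℝ → ℝ}

-- A solution of `p' ≥ c (1 + p²)` blows up in time at most `π / c`, since `arctan p` has slope
-- at least `c` and total variation less than `π`.
theorem mul_sub_lt_pi_of_le_deriv (hp : ∀ x ∈ Icc a b, DifferentiableAt ℝ p x) (hab : a ≤ b)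
    (h : ∀ x ∈ Icc a b, c * (1 + p x ^ 2) ≤ deriv p x) : c * (b - a) < π := by
  have hderiv : ∀ x ∈ Icc a b,
      HasDerivAt (fun y => arctan (p y)) (1 / (1 + p x ^ 2) * deriv p x) x :=
    fun x hx => (hp x hx).hasDerivAt.arctan
  have hslope : c * (b - a) ≤ arctan (p b) - arctan (p a) := by
    refine (convex_Icc a b).mul_sub_le_image_sub_of_le_deriv
      (fun x hx => (hderiv x hx).continuousAt.continuousWithinAt)
      (fun x hx => (hderiv x (interior_subset hx)).differentiableAt.differentiableWithinAt)
      (fun x hx => ?_) a (left_mem_Icc.2 hab) b (right_mem_Icc.2 hab) hab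
    rw [(hderiv x (interior_subset hx)).deriv, one_div_mul_eq_div, le_div_iff₀ (by positivity)]
    exact h x (interior_subset hx)
  linarith [arctan_lt_pi_div_two (p b), neg_pi_div_two_lt_arctan (p a)]

theorem le_of_deriv_pos_of_eq (hp : ∀ x ∈ Icc a b, DifferentiableAt ℝ p x) (ha : m ≤ p a)
    (h : ∀ x ∈ Icc a b, p x = m → 0 < deriv p x) : ∀ x ∈ Icc a b, m ≤ p x :=
  image_le_of_deriv_right_lt_deriv_boundary' continuousOn_const
    (fun _ _ => hasDerivWithinAt_const _ _ _) ha
    (fun x hx => (hp x hx).continuousAt.continuousWithinAt)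
    (fun x hx => (hp x (Ico_subset_Icc_self hx)).hasDerivAt.hasDerivWithinAt)
    (fun x hx heq => h x (Ico_subset_Icc_self hx) heq.symm)

theorem le_of_deriv_neg_of_eq (hp : ∀ x ∈ Icc a b, DifferentiableAt ℝ p x) (hb : m ≤ p b)
    (h : ∀ x ∈ Icc a b, p x = m → deriv p x < 0) : ∀ x ∈ Icc a b, m ≤ p x := by
  have hneg : ∀ x ∈ Icc (-b) (-a), -x ∈ Icc a b :=
    fun x hx => ⟨le_neg_of_le_neg hx.2, neg_le_of_neg_le hx.1⟩
  have hreflect := le_of_deriv_pos_of_eq (p := fun x => p (-x)) (m := m)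
    (fun x hx => (hp (-x) (hneg x hx)).comp x differentiableAt_id.neg)
    (by rwa [neg_neg]) (fun x hx heq => by
      rw [deriv_comp_neg]
      exact neg_pos.2 (h (-x) (hneg x hx) heq))
  intro x hx
  simpa only [neg_neg] using hreflect (-x) ⟨neg_le_neg hx.2, neg_le_neg hx.1⟩

theorem eq_zero_of_norm_deriv_le_of_tendsto_zero {E : Type*} [NormedAddCommGroup E]
    [NormedSpace ℝ E] {W W' : ℝ → E} (hab : a < b)
    (hW : ∀ x ∈ Ico a b, HasDerivAt W (W' x) x) (hbound : ∀ x ∈ Ico a b, ‖W' x‖ ≤ K * ‖W x‖)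
    (hlim : Tendsto W (nhdsWithin b (Iio b)) (nhds 0)) : W a = 0 := by
  have hgronwall : ∀ t ∈ Ioo a b, ‖W a‖ ≤ ‖W t‖ * exp (K * (t - a)) := by
    intro t ht
    have hrev : ∀ s ∈ Icc 0 (t - a), t - s ∈ Ico a b :=
      fun s hs => ⟨by linarith [hs.2], by linarith [hs.1, ht.2]⟩
    have hderiv : ∀ s ∈ Icc 0 (t - a), HasDerivAt (fun s => W (t - s)) (-W' (t - s)) s :=
      fun s hs => (hW (t - s) (hrev s hs)).comp_const_sub t s
    have := norm_le_gronwallBound_of_norm_deriv_right_le (K := K) (ε := 0)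
      (fun s hs => (hderiv s hs).continuousAt.continuousWithinAt)
      (fun s hs => (hderiv s (Ico_subset_Icc_self hs)).hasDerivWithinAt) le_rfl
      (fun s hs => by
        rw [norm_neg, add_zero]
        exact hbound (t - s) (hrev s (Ico_subset_Icc_self hs)))
      (t - a) (right_mem_Icc.2 (sub_nonneg.2 ht.1.le))
    simpa only [gronwallBound_ε0, sub_zero, sub_sub_cancel] using this
  have hlim' : Tendsto (fun t => ‖W t‖ * exp (K * (t - a))) (nhdsWithin b (Iio b)) (nhds 0) := by
    have hexp : Tendsto (fun t => exp (K * (t - a))) (nhdsWithin b (Iio b))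
        (nhds (exp (K * (b - a)))) :=
      ((by fun_prop : Continuous fun t => exp (K * (t - a))).tendsto b).mono_left
        nhdsWithin_le_nhds
    simpa only [norm_zero, zero_mul] using hlim.norm.mul hexp
  refine norm_le_zero_iff.1 (ge_of_tendsto hlim' ?_)
  filter_upwards [Ioo_mem_nhdsLT hab] using hgronwall

end Calculus

/-- The admissible levels in the definition of the radial principal eigenvalue with weight `w`:
those `μ` for which `f (u'', u' / r) + μ u w ≤ 0` has a positive `C²` solution on `(0, 1)`. Their
supremum is `radialEV` when `w r = r ^ (-γ)`. -/
def supersolutionLevels (f : ℝ → ℝ → ℝ) (w : ℝ → ℝ) : Set ℝ :=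
  {μ | ∃ u : ℝ → ℝ, ContDiffOn ℝ 2 u (Ioo 0 1) ∧ (∀ r ∈ Ioo (0 : ℝ) 1, 0 < u r) ∧
    ∀ r ∈ Ioo (0 : ℝ) 1, f (deriv (deriv u) r) (deriv u r / r) + μ * u r * w r ≤ 0}

/-- A positive `C²` solution on `(0, 1)` of the radial equation with weight `w` at level `μ`. -/
structure IsPosSolution (f : ℝ → ℝ → ℝ) (w : ℝ → ℝ) (μ : ℝ) (u : ℝ → ℝ) : Prop where
  contDiffOn : ContDiffOn ℝ 2 u (Ioo 0 1)
  pos : ∀ r ∈ Ioo (0 : ℝ) 1, 0 < u r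
  eq : ∀ r ∈ Ioo (0 : ℝ) 1, f (deriv (deriv u) r) (deriv u r / r) + μ * u r * w r = 0

/-- The local decay rate `-r u' / u` of `u`; it is constantly `p` for `u r = r ^ (-p)`. -/
def decayExponent (u : ℝ → ℝ) (r : ℝ) : ℝ :=
  -(r * logDeriv u r)

/-- The first-order operator obtained from `u ↦ f (u'', u' / r)` by passing to the decay exponent
`p` of `u`. -/
def riccatiOp (f : ℝ → ℝ → ℝ) (p : ℝ → ℝ) (r : ℝ) : ℝ :=
  f (-(r * deriv p r) + p r + p r ^ 2) (-p r)

section DecayExponent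

variable {f : ℝ → ℝ → ℝ} {lam Lam n μ r : ℝ} {s : Set ℝ} {u p w : ℝ → ℝ}

theorem contDiffOn_decayExponent (hs : IsOpen s) (hu : ContDiffOn ℝ 2 u s)
    (hu0 : ∀ r ∈ s, u r ≠ 0) : ContDiffOn ℝ 1 (decayExponent u) s :=
  (contDiffOn_id.mul ((hu.deriv_of_isOpen hs one_add_one_eq_two.le).div
    (hu.of_le one_le_two) hu0)).neg

theorem deriv_eq_decayExponent (hr : r ≠ 0) (hur : u r ≠ 0) :
    deriv u r = -(decayExponent u r * u r / r) := by
  rw [decayExponent, logDeriv_apply]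
  field_simp

theorem deriv_deriv_eq_decayExponent (hs : IsOpen s) (hu : ContDiffOn ℝ 2 u s)
    (hu0 : ∀ r ∈ s, u r ≠ 0) (hrs : r ∈ s) (hr : r ≠ 0) :
    deriv (deriv u) r = u r / r ^ 2 *
      (-(r * deriv (decayExponent u) r) + decayExponent u r + decayExponent u r ^ 2) := by
  have hp := ((contDiffOn_decayExponent hs hu hu0).differentiableOn one_ne_zero).hasDerivAt
    (hs.mem_nhds hrs)
  have hu' := (hu.differentiableOn two_ne_zero).hasDerivAt (hs.mem_nhds hrs)
  have hfirst : deriv u =ᶠ[nhds r] fun x => -(decayExponent u x * u x / x) := by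
    filter_upwards [hs.mem_nhds hrs, isOpen_ne.mem_nhds hr] with x hx hx0
      using deriv_eq_decayExponent hx0 (hu0 x hx)
  rw [hfirst.deriv_eq, HasDerivAt.deriv (f := fun x => -(decayExponent u x * u x / x))
    (((hp.mul hu').div (hasDerivAt_id r) hr).neg), deriv_eq_decayExponent hr (hu0 r hrs)]
  simp only [id, Pi.mul_apply]
  field_simp
  ring

theorem exists_eqOn_decayExponent (hs : IsOpen s) (hconn : s.OrdConnected) (h0 : 0 ∉ s)
    (hp : ContDiffOn ℝ 1 p s) :
    ∃ u : ℝ → ℝ, ContDiffOn ℝ 2 u s ∧ (∀ r, 0 < u r) ∧ EqOn (decayExponent u) p s := by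
  have hne : ∀ r ∈ s, r ≠ 0 := fun r hr => ne_of_mem_of_not_mem hr h0
  have hquot : ContDiffOn ℝ 1 (fun r => -(p r / r)) s := (hp.div contDiffOn_id hne).neg
  obtain ⟨G, hG⟩ := exists_forall_hasDerivAt_of_continuousOn hs hconn hquot.continuousOn
  have hG2 : ContDiffOn ℝ 2 G s := by
    rw [← one_add_one_eq_two, contDiffOn_succ_iff_deriv_of_isOpen hs]
    exact ⟨fun r hr => (hG r hr).differentiableAt.differentiableWithinAt, by simp,
      hquot.congr fun r hr => (hG r hr).deriv⟩
  refine ⟨fun r => exp (G r), hG2.exp, fun r => exp_pos _, fun r hr => ?_⟩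
  have := hne r hr
  rw [decayExponent, logDeriv_apply, (hG r hr).exp.deriv]
  field_simp

theorem RadiallyElliptic.apply_deriv_add_eq (hf : RadiallyElliptic f lam Lam n) (hs : IsOpen s)
    (hu : ContDiffOn ℝ 2 u s) (hpos : ∀ r ∈ s, 0 < u r) (hrs : r ∈ s) (hr : 0 < r) :
    f (deriv (deriv u) r) (deriv u r / r) + μ * u r * w r =
      u r / r ^ 2 * (riccatiOp f (decayExponent u) r + μ * (r ^ 2 * w r)) := by
  have hu0 : ∀ r ∈ s, u r ≠ 0 := fun r hr => (hpos r hr).ne'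
  have hfirst : deriv u r / r = u r / r ^ 2 * -decayExponent u r := by
    rw [deriv_eq_decayExponent hr.ne' (hu0 r hrs)]
    field_simp
  rw [deriv_deriv_eq_decayExponent hs hu hu0 hrs hr.ne', hfirst,
    hf.homogeneous _ _ _ (div_pos (hpos r hrs) (pow_pos hr 2)), riccatiOp]
  field_simp

theorem riccatiOp_congr {p q : ℝ → ℝ} (hs : IsOpen s) (h : EqOn p q s) (hr : r ∈ s) :
    riccatiOp f p r = riccatiOp f q r := by
  rw [riccatiOp, riccatiOp, (h.eventuallyEq_of_mem (hs.mem_nhds hr)).deriv_eq, h hr]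

theorem RadiallyElliptic.mem_supersolutionLevels_iff (hf : RadiallyElliptic f lam Lam n) :
    μ ∈ supersolutionLevels f w ↔ ∃ p : ℝ → ℝ, ContDiffOn ℝ 1 p (Ioo 0 1) ∧
      ∀ r ∈ Ioo (0 : ℝ) 1, riccatiOp f p r ≤ -(μ * (r ^ 2 * w r)) := by
  have hequiv : ∀ u : ℝ → ℝ, ContDiffOn ℝ 2 u (Ioo 0 1) → (∀ r ∈ Ioo (0 : ℝ) 1, 0 < u r) →
      ∀ r ∈ Ioo (0 : ℝ) 1, (f (deriv (deriv u) r) (deriv u r / r) + μ * u r * w r ≤ 0 ↔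
        riccatiOp f (decayExponent u) r ≤ -(μ * (r ^ 2 * w r))) := by
    intro u hu hpos r hr
    have hscale : 0 < u r / r ^ 2 := div_pos (hpos r hr) (pow_pos hr.1 2)
    rw [hf.apply_deriv_add_eq isOpen_Ioo hu hpos hr hr.1]
    exact (smul_nonpos_iff_nonpos_of_pos_left hscale).trans le_neg_iff_add_nonpos_right.symm
  constructor
  · rintro ⟨u, hu, hpos, hsuper⟩
    exact ⟨decayExponent u, contDiffOn_decayExponent isOpen_Ioo hu fun r hr => (hpos r hr).ne',
      fun r hr => (hequiv u hu hpos r hr).1 (hsuper r hr)⟩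
  · rintro ⟨p, hp, hsuper⟩
    obtain ⟨u, hu, hpos, hup⟩ :=
      exists_eqOn_decayExponent isOpen_Ioo ordConnected_Ioo (by simp) hp
    refine ⟨u, hu, fun r _ => hpos r, fun r hr => (hequiv u hu (fun r _ => hpos r) r hr).2 ?_⟩
    rw [riccatiOp_congr isOpen_Ioo hup hr]
    exact hsuper r hr

theorem IsPosSolution.riccatiOp_eq (hf : RadiallyElliptic f lam Lam n)
    (hu : IsPosSolution f w μ u) (hr : r ∈ Ioo (0 : ℝ) 1) :
    riccatiOp f (decayExponent u) r = -(μ * (r ^ 2 * w r)) := by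
  have hscale : u r / r ^ 2 ≠ 0 := (div_pos (hu.pos r hr) (pow_pos hr.1 2)).ne'
  have heq := hu.eq r hr
  rw [hf.apply_deriv_add_eq isOpen_Ioo hu.contDiffOn hu.pos hr hr.1] at heq
  exact eq_neg_of_add_eq_zero_left ((mul_eq_zero_iff_left hscale).1 heq)

end DecayExponent

section SupersolutionLevels

variable {f : ℝ → ℝ → ℝ} {lam Lam n γ μ m r y : ℝ} {p w θ : ℝ → ℝ}

namespace RadiallyElliptic

theorem le_mul_deriv_of_riccatiOp_le (hf : RadiallyElliptic f lam Lam n) (hy : 0 ≤ y)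
    (h : riccatiOp f p r ≤ -y) :
    p r ^ 2 / 2 + y / Lam - (Lam * n / lam + 1) ^ 2 / 2 ≤ r * deriv p r := by
  have hfst := hf.fst_le hy h
  rw [abs_neg] at hfst
  nlinarith [sq_abs (p r), neg_abs_le (p r), sq_nonneg (|p r| - (Lam * n / lam + 1))]

theorem bddAbove_supersolutionLevels (hf : RadiallyElliptic f lam Lam n)
    (hw : ContinuousOn w (Ioo 0 1)) (hpos : ∀ r ∈ Ioo (0 : ℝ) 1, 0 < w r) :
    BddAbove (supersolutionLevels f w) := by
  have hsub : ∀ r ∈ Icc (1 / 4 : ℝ) (3 / 4), r ∈ Ioo (0 : ℝ) 1 :=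
    fun r hr => ⟨by linarith [hr.1], by linarith [hr.2]⟩
  obtain ⟨δ, hδ, hδle⟩ : ∃ δ > 0, ∀ r ∈ Icc (1 / 4 : ℝ) (3 / 4), δ ≤ r ^ 2 * w r :=
    isCompact_Icc.exists_forall_le' ((continuousOn_pow 2).mul (hw.mono hsub))
      fun r hr => mul_pos (pow_pos (hsub r hr).1 2) (hpos r (hsub r hr))
  set B := 128 + (Lam * n / lam + 1) ^ 2 / 2 with hB
  refine ⟨Lam * B / δ, fun μ hμ => ?_⟩
  by_contra! hlt
  obtain ⟨p, hp, hsuper⟩ := hf.mem_supersolutionLevels_iff.1 hμ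
  have hμ0 : 0 < μ := (by have := hf.Lam_pos; positivity : 0 < Lam * B / δ).trans hlt
  have hLam : Lam * B ≤ μ * δ := ((div_lt_iff₀ hδ).1 hlt).le
  have hdiff : ∀ r ∈ Icc (1 / 4 : ℝ) (3 / 4), DifferentiableAt ℝ p r := fun r hr =>
    (hp.differentiableOn one_ne_zero).differentiableAt (isOpen_Ioo.mem_nhds (hsub r hr))
  have hriccati : ∀ r ∈ Icc (1 / 4 : ℝ) (3 / 4), p r ^ 2 / 2 + 128 ≤ deriv p r := by
    intro r hr
    have hgrowth : p r ^ 2 / 2 + μ * δ / Lam - (Lam * n / lam + 1) ^ 2 / 2 ≤ r * deriv p r :=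
      hf.le_mul_deriv_of_riccatiOp_le (mul_pos hμ0 hδ).le ((hsuper r (hsub r hr)).trans
        (neg_le_neg (mul_le_mul_of_nonneg_left (hδle r hr) hμ0.le)))
    have hlevel : B ≤ μ * δ / Lam := by rwa [le_div_iff₀' hf.Lam_pos]
    nlinarith [sq_nonneg (p r), (hsub r hr).1, (hsub r hr).2]
  have hblowup := mul_sub_lt_pi_of_le_deriv (p := fun r => p r / 16) (c := 8)
    (fun r hr => (hdiff r hr).div_const 16) (by norm_num) fun r hr => by
      rw [deriv_div_const]
      linarith [hriccati r hr]
  linarith [pi_lt_four]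

theorem mem_supersolutionLevels_rpow_iff (hf : RadiallyElliptic f lam Lam n) :
    μ ∈ supersolutionLevels f (fun r => r ^ (-γ)) ↔ ∃ p : ℝ → ℝ, ContDiffOn ℝ 1 p (Ioo 0 1) ∧
      ∀ r ∈ Ioo (0 : ℝ) 1, riccatiOp f p r ≤ -(μ * r ^ (2 - γ)) := by
  have hpow : ∀ r ∈ Ioo (0 : ℝ) 1, r ^ 2 * r ^ (-γ) = r ^ (2 - γ) := fun r hr => by
    rw [sub_eq_add_neg, rpow_add hr.1, rpow_two]
  rw [hf.mem_supersolutionLevels_iff]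
  refine exists_congr fun p => and_congr_right fun _ => forall₂_congr fun r hr => ?_
  rw [hpow r hr]

theorem exists_pos_mem_supersolutionLevels (hf : RadiallyElliptic f lam Lam n)
    (hgap : Lam < lam * n) (hγ : γ ≤ 2) :
    ∃ μ ∈ supersolutionLevels f (fun r => r ^ (-γ)), 0 < μ := by
  have hLam := hf.Lam_pos
  have : 0 < lam * n - Lam := sub_pos.2 hgap
  set m := (lam * n - Lam) / (2 * Lam) with hm
  have hm0 : 0 < m := by positivity
  refine ⟨m * (Lam * m), hf.mem_supersolutionLevels_rpow_iff.2
    ⟨fun _ => m, contDiffOn_const, fun r hr => ?_⟩, by positivity⟩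
  have hle := hf.apply_add_sq_neg_le hm0.le
  have hκm : lam * n = Lam + 2 * (Lam * m) := by
    rw [hm]
    field_simp
    ring
  have hpow : r ^ (2 - γ) ≤ 1 := rpow_le_one hr.1.le hr.2.le (by linarith)
  rw [riccatiOp, deriv_const, mul_zero, neg_zero, zero_add]
  calc f (m + m ^ 2) (-m) ≤ m * (Lam * (1 + m) - lam * n) := hle
    _ = -(m * (Lam * m) * 1) := by rw [hκm]; ring
    _ ≤ -(m * (Lam * m) * r ^ (2 - γ)) := by gcongr

theorem riccatiOp_mul_le (hf : RadiallyElliptic f lam Lam n) (hθ : DifferentiableAt ℝ θ r)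
    (hp : DifferentiableAt ℝ p r) (hθ0 : 0 < θ r) (hθ1 : θ r ≤ 1) (hθ' : 0 ≤ r * deriv θ r)
    (hp0 : 0 ≤ p r) :
    riccatiOp f (fun x => θ x * p x) r ≤ θ r * riccatiOp f p r - lam * (r * deriv θ r * p r) := by
  set a := θ r * (-(r * deriv p r) + p r + p r ^ 2)
  set z := r * deriv θ r * p r + θ r * (1 - θ r) * p r ^ 2
  have hz : r * deriv θ r * p r ≤ z :=
    le_add_of_nonneg_right (mul_nonneg (mul_nonneg hθ0.le (sub_nonneg.2 hθ1)) (sq_nonneg _))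
  have hz0 : 0 ≤ z := (mul_nonneg hθ' hp0).trans hz
  have hmul : riccatiOp f (fun x => θ x * p x) r = f (a - z) (θ r * -p r) := by
    rw [riccatiOp, deriv_fun_mul hθ hp]
    congr 1 <;> ring
  have hhom : θ r * riccatiOp f p r = f a (θ r * -p r) := (hf.homogeneous _ _ _ hθ0).symm
  have hmono := (hf.sub_fst (θ r * -p r) (sub_le_self a hz0)).1
  rw [sub_sub_cancel] at hmono
  rw [hmul, hhom]
  linarith [mul_le_mul_of_nonneg_left hz hf.lam_pos.le]

end RadiallyElliptic

/-- A factor in `[1/2, 1]`, increasing from `1/2` at the origin, by which a decay exponent is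
multiplied in order to increase the level. -/
def dampingFactor (A β r : ℝ) : ℝ :=
  1 - exp (-(A * r ^ β)) / 2

theorem hasDerivAt_dampingFactor {A β : ℝ} (hr : 0 < r) :
    HasDerivAt (dampingFactor A β) (A * β * r ^ β * exp (-(A * r ^ β)) / 2 / r) r := by
  refine ((((hasDerivAt_rpow_const (p := β) (Or.inl hr.ne')).const_mul A).neg.exp.div_const
    2).const_sub 1).congr_deriv ?_
  rw [rpow_sub_one hr.ne', Pi.neg_apply]
  ring

theorem contDiffOn_dampingFactor {A β : ℝ} : ContDiffOn ℝ 1 (dampingFactor A β) (Ioo 0 1) :=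
  contDiffOn_const.sub
    ((contDiffOn_const.mul (contDiffOn_id.rpow_const_of_ne fun _ hr => hr.1.ne')).neg.exp.div_const
      2)

theorem RadiallyElliptic.riccatiOp_dampingFactor_mul_le (hf : RadiallyElliptic f lam Lam n)
    {A β : ℝ} (hA : 0 ≤ A) (hβ : 0 ≤ β) (hr : r ∈ Ioo (0 : ℝ) 1) (hp : DifferentiableAt ℝ p r)
    (hp0 : 0 ≤ p r) (hAp : 1 + |μ| ≤ lam * (A * β * p r)) (h : riccatiOp f p r ≤ -(μ * r ^ β)) :
    riccatiOp f (fun x => dampingFactor A β x * p x) r ≤ -((μ + exp (-A) / 2) * r ^ β) := by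
  have hr0 := hr.1
  have hpow1 : r ^ β ≤ 1 := rpow_le_one hr0.le hr.2.le hβ
  set η := exp (-(A * r ^ β))
  have hη1 : η ≤ 1 := exp_le_one_iff.2 (neg_nonpos.2 (by positivity))
  have hAη : exp (-A) ≤ η := exp_le_exp.2 (neg_le_neg (mul_le_of_le_one_right hA hpow1))
  have hθ : dampingFactor A β r = 1 - η / 2 := rfl
  have hθ' : r * deriv (dampingFactor A β) r = A * β * r ^ β * η / 2 := by
    rw [(hasDerivAt_dampingFactor hr0).deriv]
    exact mul_div_cancel₀ _ hr0.ne'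
  have hle := hf.riccatiOp_mul_le (hasDerivAt_dampingFactor (A := A) (β := β) hr0).differentiableAt
    hp (by rw [hθ]; linarith) (by rw [hθ]; linarith [exp_pos (-A)]) (by rw [hθ']; positivity) hp0
  rw [hθ, hθ'] at hle
  calc riccatiOp f (fun x => dampingFactor A β x * p x) r
      ≤ (1 - η / 2) * riccatiOp f p r - lam * (A * β * r ^ β * η / 2 * p r) := hle
    _ = (1 - η / 2) * riccatiOp f p r - lam * (A * β * p r) * (r ^ β * η / 2) := by ring
    _ ≤ (1 - η / 2) * -(μ * r ^ β) - (1 + |μ|) * (r ^ β * η / 2) :=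
        sub_le_sub (mul_le_mul_of_nonneg_left h (by linarith))
          (mul_le_mul_of_nonneg_right hAp (by positivity))
    _ = -((μ + η / 2) * r ^ β) - (|μ| - μ) * (r ^ β * η / 2) := by ring
    _ ≤ -((μ + η / 2) * r ^ β) :=
        sub_le_self _ (mul_nonneg (sub_nonneg.2 (le_abs_self μ)) (by positivity))
    _ ≤ -((μ + exp (-A) / 2) * r ^ β) := by gcongr

theorem RadiallyElliptic.exists_lt_mem_supersolutionLevels (hf : RadiallyElliptic f lam Lam n)
    (hγ : γ < 2) (hm : 0 < m) (hp : ContDiffOn ℝ 1 p (Ioo 0 1))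
    (hlow : ∀ r ∈ Ioo (0 : ℝ) 1, m ≤ p r)
    (h : ∀ r ∈ Ioo (0 : ℝ) 1, riccatiOp f p r ≤ -(μ * r ^ (2 - γ))) :
    ∃ μ' ∈ supersolutionLevels f (fun r => r ^ (-γ)), μ < μ' := by
  have hlam := hf.lam_pos
  have hβ : 0 < 2 - γ := sub_pos.2 hγ
  set A := (1 + |μ|) / (lam * (2 - γ) * m) with hA
  have hA0 : 0 < A := by positivity
  refine ⟨μ + exp (-A) / 2, hf.mem_supersolutionLevels_rpow_iff.2
    ⟨fun r => dampingFactor A (2 - γ) r * p r, contDiffOn_dampingFactor.mul hp, fun r hr => ?_⟩,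
    lt_add_of_pos_right μ (half_pos (exp_pos _))⟩
  have hAp : 1 + |μ| ≤ lam * (A * (2 - γ) * p r) := by
    calc 1 + |μ| = lam * (A * (2 - γ) * m) := by rw [hA]; field_simp
      _ ≤ lam * (A * (2 - γ) * p r) := by gcongr; exact hlow r hr
  exact hf.riccatiOp_dampingFactor_mul_le hA0.le hβ.le hr
    ((hp.differentiableOn one_ne_zero).differentiableAt (isOpen_Ioo.mem_nhds hr))
    (hm.le.trans (hlow r hr)) hAp (h r hr)

end SupersolutionLevels

section Boundedness

variable {f : ℝ → ℝ → ℝ} {lam Lam n γ μ m y r r₁ K R : ℝ} {g p u : ℝ → ℝ}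

namespace RadiallyElliptic

theorem deriv_neg_of_neg_le_riccatiOp (hf : RadiallyElliptic f lam Lam n) (hr : 0 ≤ r)
    (hp : 0 ≤ p r) (h : -y ≤ riccatiOp f p r) (hy : y < p r * (lam * n - Lam * (1 + p r))) :
    deriv p r < 0 := by
  by_contra! hderiv
  have hmono := (hf.sub_fst (-p r) (a := -(r * deriv p r) + p r + p r ^ 2) (a' := p r + p r ^ 2)
    (by linarith [mul_nonneg hr hderiv])).1
  have hgain : 0 ≤ lam * (p r + p r ^ 2 - (-(r * deriv p r) + p r + p r ^ 2)) :=
    mul_nonneg hf.lam_pos.le (by linarith [mul_nonneg hr hderiv])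
  rw [riccatiOp] at h
  linarith [hf.apply_add_sq_neg_le hp]

theorem deriv_pos_of_riccatiOp_le_neg (hf : RadiallyElliptic f lam Lam n) (hr : 0 ≤ r)
    (hp : 0 ≤ p r) (h : riccatiOp f p r ≤ -y) (hy : Lam * n * p r < y) : 0 < deriv p r := by
  by_contra! hderiv
  have hfst : 0 ≤ -(r * deriv p r) + p r + p r ^ 2 := by
    linarith [mul_nonpos_of_nonneg_of_nonpos hr hderiv, sq_nonneg (p r)]
  rw [riccatiOp] at h
  linarith [hf.neg_mul_le_apply_neg hfst hp]

theorem le_of_neg_le_riccatiOp (hf : RadiallyElliptic f lam Lam n)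
    (hp : DifferentiableOn ℝ p (Ioo 0 1)) (hr₁ : r₁ ∈ Ioo (0 : ℝ) 1) (hm : 0 ≤ m)
    (hpm : m ≤ p r₁) (h : ∀ r ∈ Ioc 0 r₁, -y ≤ riccatiOp f p r)
    (hy : y < m * (lam * n - Lam * (1 + m))) : ∀ r ∈ Ioc 0 r₁, m ≤ p r := by
  intro r hr
  have hpos : ∀ x ∈ Icc r r₁, 0 < x := fun x hx => hr.1.trans_le hx.1
  refine le_of_deriv_neg_of_eq
    (fun x hx => hp.differentiableAt (isOpen_Ioo.mem_nhds ⟨hpos x hx, hx.2.trans_lt hr₁.2⟩)) hpm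
    (fun x hx heq => ?_) r (left_mem_Icc.2 hr.2)
  exact hf.deriv_neg_of_neg_le_riccatiOp (hpos x hx).le (heq ▸ hm) (h x ⟨hpos x hx, hx.2⟩)
    (heq ▸ hy)

theorem le_of_riccatiOp_le_neg (hf : RadiallyElliptic f lam Lam n)
    (hp : DifferentiableOn ℝ p (Ioo 0 1)) (hr₁ : r₁ ∈ Ioo (0 : ℝ) 1) (hm : 0 ≤ m)
    (hpm : m ≤ p r₁) (h : ∀ r ∈ Ico r₁ 1, riccatiOp f p r ≤ -y) (hy : Lam * n * m < y) :
    ∀ r ∈ Ico r₁ 1, m ≤ p r := by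
  intro r hr
  have hpos : ∀ x ∈ Icc r₁ r, 0 < x := fun x hx => hr₁.1.trans_le hx.1
  refine le_of_deriv_pos_of_eq
    (fun x hx => hp.differentiableAt (isOpen_Ioo.mem_nhds ⟨hpos x hx, hx.2.trans_lt hr.2⟩)) hpm
    (fun x hx heq => ?_) r (right_mem_Icc.2 hr.1)
  exact hf.deriv_pos_of_riccatiOp_le_neg (hpos x hx).le (heq ▸ hm)
    (h x ⟨hx.1, hx.2.trans_lt hr.2⟩) (heq ▸ hy)

theorem mul_half_le_mul_sub (hf : RadiallyElliptic f lam Lam n) (hm : 0 ≤ m)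
    (hle : m ≤ (lam * n - Lam) / (2 * Lam)) :
    m * ((lam * n - Lam) / 2) ≤ m * (lam * n - Lam * (1 + m)) := by
  have hLam := hf.Lam_pos
  rw [le_div_iff₀ (by positivity)] at hle
  exact mul_le_mul_of_nonneg_left (by linarith) hm

theorem exists_pos_le_of_riccatiOp_eq (hf : RadiallyElliptic f lam Lam n)
    (hp : DifferentiableOn ℝ p (Ioo 0 1)) (hr₁ : r₁ ∈ Ioo (0 : ℝ) 1) (hm : 0 < m)
    (hpm : m ≤ p r₁) (h : ∀ r ∈ Ioo (0 : ℝ) 1, riccatiOp f p r = -g r)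
    (hg : MonotoneOn g (Ioo 0 1)) (hg₁ : 0 < g r₁)
    (hgm : g r₁ < m * (lam * n - Lam * (1 + m))) :
    ∃ m₀ > 0, ∀ r ∈ Ioo (0 : ℝ) 1, m₀ ≤ p r := by
  have hLam := hf.Lam_pos
  have hn := hf.mult_pos
  set m₀ := min m (g r₁ / (2 * (Lam * n)))
  have hm₀ : 0 < m₀ := lt_min hm (by positivity)
  have hm₀g : Lam * n * m₀ < g r₁ := by
    have : Lam * n * m₀ ≤ Lam * n * (g r₁ / (2 * (Lam * n))) :=
      mul_le_mul_of_nonneg_left (min_le_right _ _) (by positivity)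
    have hhalf : Lam * n * (g r₁ / (2 * (Lam * n))) = g r₁ / 2 := by field_simp
    linarith
  refine ⟨m₀, hm₀, fun r hr => ?_⟩
  rcases le_total r r₁ with hle | hle
  · refine (min_le_left _ _).trans (hf.le_of_neg_le_riccatiOp hp hr₁ hm.le hpm (y := g r₁)
      (fun x hx => ?_) hgm r ⟨hr.1, hle⟩)
    have hx01 : x ∈ Ioo (0 : ℝ) 1 := ⟨hx.1, hx.2.trans_lt hr₁.2⟩
    rw [h x hx01]
    exact neg_le_neg (hg hx01 hr₁ hx.2)
  · refine hf.le_of_riccatiOp_le_neg hp hr₁ hm₀.le ((min_le_left _ _).trans hpm) (y := g r₁)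
      (fun x hx => ?_) hm₀g r ⟨hle, hr.2⟩
    have hx01 : x ∈ Ioo (0 : ℝ) 1 := ⟨hr₁.1.trans_le hx.1, hx.2⟩
    rw [h x hx01]
    exact neg_le_neg (hg hr₁ hx01 hx.1)

end RadiallyElliptic

theorem exists_mul_rpow_lt {K β ε : ℝ} (hβ : 0 < β) (hε : 0 < ε) :
    ∃ R ∈ Ioo (0 : ℝ) 1, K * R ^ β < ε := by
  have hlim : Tendsto (fun r : ℝ => K * r ^ β) (nhdsWithin 0 (Ioi 0)) (nhds 0) := by
    have := (continuousAt_rpow_const 0 β (Or.inr hβ.le)).tendsto.const_mul K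
    rw [zero_rpow hβ.ne', mul_zero] at this
    exact this.mono_left nhdsWithin_le_nhds
  have h01 : ∀ᶠ r in nhdsWithin (0 : ℝ) (Ioi 0), r ∈ Ioo (0 : ℝ) 1 := Ioo_mem_nhdsGT zero_lt_one
  exact (h01.and (hlim.eventually_lt_const hε)).exists

-- Otherwise `p` would exceed `K r ^ (2 - γ)` at a small `r₁`, the barriers would propagate a
-- positive lower bound for `p` to all of `(0, 1)`, and `μ` could be increased.
theorem RadiallyElliptic.exists_le_mul_rpow (hf : RadiallyElliptic f lam Lam n)
    (hgap : Lam < lam * n) (hγ : γ < 2) (hμ : 0 < μ)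
    (hmax : μ ∈ upperBounds (supersolutionLevels f fun r => r ^ (-γ)))
    (hp : ContDiffOn ℝ 1 p (Ioo 0 1))
    (h : ∀ r ∈ Ioo (0 : ℝ) 1, riccatiOp f p r = -(μ * r ^ (2 - γ))) :
    ∃ R ∈ Ioo (0 : ℝ) 1, ∃ K ≥ 0, ∀ r ∈ Ioc 0 R, p r ≤ K * r ^ (2 - γ) := by
  have hLam := hf.Lam_pos
  have hβ : 0 < 2 - γ := sub_pos.2 hγ
  set κ := lam * n - Lam
  have hκ0 : 0 < κ := sub_pos.2 hgap
  obtain ⟨R, hR, hRκ⟩ : ∃ R ∈ Ioo (0 : ℝ) 1, 2 * μ / κ * R ^ (2 - γ) < κ / (2 * Lam) :=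
    exists_mul_rpow_lt hβ (by positivity)
  refine ⟨R, hR, 2 * μ / κ, by positivity, fun r₁ hr₁ => ?_⟩
  by_contra! hlarge
  have hr₁' : r₁ ∈ Ioo (0 : ℝ) 1 := ⟨hr₁.1, hr₁.2.trans_lt hR.2⟩
  have hpow : 0 < r₁ ^ (2 - γ) := rpow_pos_of_pos hr₁.1 _
  set m := min (p r₁) (κ / (2 * Lam))
  have hKm : 2 * μ / κ * r₁ ^ (2 - γ) < m := by
    refine lt_min hlarge (lt_of_le_of_lt ?_ hRκ)
    gcongr
    exacts [hr₁.1.le, hr₁.2]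
  have hm : 0 < m := (by positivity : 0 < 2 * μ / κ * r₁ ^ (2 - γ)).trans hKm
  have hbarrier : μ * r₁ ^ (2 - γ) < m * (lam * n - Lam * (1 + m)) := by
    calc μ * r₁ ^ (2 - γ) = 2 * μ / κ * r₁ ^ (2 - γ) * (κ / 2) := by field_simp
      _ < m * (κ / 2) := by gcongr
      _ ≤ m * (lam * n - Lam * (1 + m)) := hf.mul_half_le_mul_sub hm.le (min_le_right _ _)
  have hmono : MonotoneOn (fun r : ℝ => μ * r ^ (2 - γ)) (Ioo 0 1) := fun x hx y _ hxy =>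
    mul_le_mul_of_nonneg_left (rpow_le_rpow hx.1.le hxy hβ.le) hμ.le
  obtain ⟨m₀, hm₀, hlow⟩ := hf.exists_pos_le_of_riccatiOp_eq (hp.differentiableOn one_ne_zero)
    hr₁' hm (min_le_left _ _) h hmono (by positivity) hbarrier
  obtain ⟨μ', hμ', hlt⟩ :=
    hf.exists_lt_mem_supersolutionLevels hγ hm₀ hp hlow fun r hr => (h r hr).le
  exact hlt.not_ge (hmax hμ')

theorem exists_forall_le_of_decayExponent_le {β : ℝ} (hβ : 0 < β) (hK : 0 ≤ K)
    (hu : ∀ r ∈ Ioc 0 R, DifferentiableAt ℝ u r) (hpos : ∀ r ∈ Ioc 0 R, 0 < u r)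
    (h : ∀ r ∈ Ioc 0 R, decayExponent u r ≤ K * r ^ β) :
    ∃ C, ∀ r ∈ Ioc 0 R, u r ≤ C := by
  have hderiv : ∀ r ∈ Ioc 0 R, HasDerivAt (fun r => log (u r) + K / β * r ^ β)
      ((K * r ^ β - decayExponent u r) / r) r := by
    intro r hr
    have hr0 := hr.1.ne'
    refine (((hu r hr).hasDerivAt.log (hpos r hr).ne').add
      ((hasDerivAt_rpow_const (p := β) (Or.inl hr0)).const_mul (K / β))).congr_deriv ?_
    rw [rpow_sub_one hr0, decayExponent, logDeriv_apply]
    field_simp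
    ring
  have hmono : MonotoneOn (fun r => log (u r) + K / β * r ^ β) (Ioc 0 R) :=
    monotoneOn_of_hasDerivWithinAt_nonneg (convex_Ioc 0 R)
      (fun r hr => (hderiv r hr).continuousAt.continuousWithinAt)
      (fun r hr => (hderiv r (interior_subset hr)).hasDerivWithinAt)
      (fun r hr => div_nonneg (sub_nonneg.2 (h r (interior_subset hr))) (interior_subset hr).1.le)
  refine ⟨exp (log (u R) + K / β * R ^ β), fun r hr => ?_⟩
  rw [← log_le_iff_le_exp (hpos r hr)]
  have hcorr : 0 ≤ K / β * r ^ β := mul_nonneg (by positivity) (rpow_nonneg hr.1.le β)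
  linarith [hmono hr ⟨hr.1.trans_le hr.2, le_rfl⟩ hr.2]

theorem IsPosSolution.exists_forall_abs_le (hf : RadiallyElliptic f lam Lam n)
    (hgap : Lam < lam * n) (hγ : γ < 2)
    (hu : IsPosSolution f (fun r => r ^ (-γ))
      (sSup (supersolutionLevels f fun r => r ^ (-γ))) u)
    (hcont : ContinuousOn u (Ioc 0 1)) : ∃ C, ∀ r ∈ Ioo (0 : ℝ) 1, |u r| ≤ C := by
  have hbdd : BddAbove (supersolutionLevels f fun r => r ^ (-γ)) :=
    hf.bddAbove_supersolutionLevels (continuousOn_id.rpow_const fun r hr => Or.inl hr.1.ne')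
      fun r hr => rpow_pos_of_pos hr.1 _
  obtain ⟨μ, hμ, hμ0⟩ := hf.exists_pos_mem_supersolutionLevels hgap hγ.le
  have hriccati : ∀ r ∈ Ioo (0 : ℝ) 1, riccatiOp f (decayExponent u) r =
      -(sSup (supersolutionLevels f fun r => r ^ (-γ)) * r ^ (2 - γ)) := fun r hr => by
    rw [hu.riccatiOp_eq hf hr, sub_eq_add_neg 2, rpow_add hr.1, rpow_two]
  obtain ⟨R, hR, K, hK, hdecay⟩ := hf.exists_le_mul_rpow hgap hγ (hμ0.trans_le (le_csSup hbdd hμ))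
    (fun μ' hμ' => le_csSup hbdd hμ')
    (contDiffOn_decayExponent isOpen_Ioo hu.contDiffOn fun r hr => (hu.pos r hr).ne') hriccati
  have hsub : Ioc 0 R ⊆ Ioo 0 1 := fun r hr => ⟨hr.1, hr.2.trans_lt hR.2⟩
  obtain ⟨C₀, hC₀⟩ := exists_forall_le_of_decayExponent_le (sub_pos.2 hγ) hK
    (fun r hr => (hu.contDiffOn.differentiableOn two_ne_zero).differentiableAt
      (isOpen_Ioo.mem_nhds (hsub hr))) (fun r hr => hu.pos r (hsub hr)) hdecay
  obtain ⟨C₁, hC₁⟩ := isCompact_Icc.exists_bound_of_continuousOn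
    (hcont.mono fun r (hr : r ∈ Icc R 1) => ⟨hR.1.trans_le hr.1, hr.2⟩)
  refine ⟨max C₀ C₁, fun r hr => ?_⟩
  rcases le_total r R with hle | hle
  · rw [abs_of_pos (hu.pos r hr)]
    exact le_max_of_le_left (hC₀ r ⟨hr.1, hle⟩)
  · exact le_max_of_le_right (hC₁ r ⟨hle, hr.2.le⟩)

end Boundedness

/-- The Wronskian `u' v - u v'`; for positive `u` and `v` on an interval, it vanishes identically if
and only if `u` and `v` are proportional. -/
def wronskian (u v : ℝ → ℝ) (r : ℝ) : ℝ :=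
  deriv u r * v r - u r * deriv v r

section Simplicity

variable {f : ℝ → ℝ → ℝ} {lam Lam n μ r : ℝ} {s : Set ℝ} {u v w : ℝ → ℝ}

theorem hasDerivAt_wronskian (hs : IsOpen s) (hu : ContDiffOn ℝ 2 u s) (hv : ContDiffOn ℝ 2 v s)
    (hr : r ∈ s) :
    HasDerivAt (wronskian u v) (deriv (deriv u) r * v r - u r * deriv (deriv v) r) r := by
  have hderiv : ∀ {g : ℝ → ℝ}, ContDiffOn ℝ 2 g s →
      HasDerivAt g (deriv g r) r ∧ HasDerivAt (deriv g) (deriv (deriv g) r) r := fun hg =>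
    ⟨(hg.differentiableOn two_ne_zero).hasDerivAt (hs.mem_nhds hr),
      ((hg.deriv_of_isOpen hs one_add_one_eq_two.le).differentiableOn one_ne_zero).hasDerivAt
        (hs.mem_nhds hr)⟩
  obtain ⟨hu₁, hu₂⟩ := hderiv hu
  obtain ⟨hv₁, hv₂⟩ := hderiv hv
  exact ((hu₂.mul hv₁).sub (hu₁.mul hv₂)).congr_deriv (by ring)

theorem exists_pos_forall_eq_mul_of_wronskian_eq_zero (hs : IsOpen s) (hconn : IsPreconnected s)
    (hne : s.Nonempty) (hu : DifferentiableOn ℝ u s) (hv : DifferentiableOn ℝ v s)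
    (hupos : ∀ r ∈ s, 0 < u r) (hvpos : ∀ r ∈ s, 0 < v r) (h : ∀ r ∈ s, wronskian u v r = 0) :
    ∃ t, 0 < t ∧ ∀ r ∈ s, u r = t * v r := by
  have hu0 : ∀ r ∈ s, u r ≠ 0 := fun r hr => (hupos r hr).ne'
  have hv0 : ∀ r ∈ s, v r ≠ 0 := fun r hr => (hvpos r hr).ne'
  have hlog : EqOn (logDeriv u) (logDeriv v) s := fun r hr => by
    have hW := h r hr
    rw [wronskian] at hW
    rw [logDeriv_apply, logDeriv_apply, div_eq_div_iff (hu0 r hr) (hv0 r hr)]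
    linarith
  obtain ⟨t, -, ht⟩ := (logDeriv_eqOn_iff hu hv hs hconn hv0 hu0).1 hlog
  obtain ⟨r, hr⟩ := hne
  have hpos : 0 < t * v r := (hupos r hr).trans_eq (ht hr)
  exact ⟨t, pos_of_mul_pos_left hpos (hvpos r hr).le, fun x hx => ht hx⟩

namespace RadiallyElliptic

theorem mul_abs_deriv_deriv_le (hf : RadiallyElliptic f lam Lam n) (hu : IsPosSolution f w μ u)
    (hr : r ∈ Ioo (0 : ℝ) 1) :
    lam * |deriv (deriv u) r| ≤ |μ * u r * w r| + Lam * n * (|deriv u r| / r) := by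
  have hell := hf.mul_abs_sub_le (deriv (deriv u) r) 0 (deriv u r / r) 0
  rwa [hf.apply_zero, sub_zero, sub_zero, sub_zero, eq_neg_of_add_eq_zero_left (hu.eq r hr),
    abs_neg, abs_div, abs_of_pos hr.1] at hell

theorem exists_forall_abs_deriv_le (hf : RadiallyElliptic f lam Lam n)
    (hu : IsPosSolution f w μ u) (hw : ContinuousOn w (Ioc 0 1))
    (hcont : ContinuousOn u (Ioc 0 1)) :
    ∃ B, ∀ r ∈ Ico (1 / 2 : ℝ) 1, |deriv u r| ≤ B := by
  have hlam := hf.lam_pos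
  have hLn : 0 < Lam * n := mul_pos hf.Lam_pos hf.mult_pos
  have hsub : Ico (1 / 2 : ℝ) 1 ⊆ Ioo 0 1 := fun r hr => ⟨by linarith [hr.1], hr.2⟩
  have hsub' : Icc (1 / 2 : ℝ) 1 ⊆ Ioc 0 1 := fun r hr => ⟨by linarith [hr.1], hr.2⟩
  obtain ⟨C, hC⟩ := isCompact_Icc.exists_bound_of_continuousOn
    (((hcont.const_mul μ).mul hw).mono hsub')
  have hC0 : 0 ≤ C := (norm_nonneg _).trans (hC 1 ⟨by norm_num, le_rfl⟩)
  have hsecond : ∀ r ∈ Ico (1 / 2 : ℝ) 1,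
      ‖deriv (deriv u) r‖ ≤ 2 * (Lam * n) / lam * ‖deriv u r‖ + C / lam := by
    intro r hr
    have hr0 := (hsub hr).1
    have hsource : |μ * u r * w r| ≤ C := hC r ⟨hr.1, hr.2.le⟩
    have hquot : |deriv u r| / r ≤ 2 * |deriv u r| := by
      rw [div_le_iff₀ hr0]
      nlinarith [abs_nonneg (deriv u r), hr.1]
    rw [Real.norm_eq_abs, Real.norm_eq_abs, div_mul_eq_mul_div, ← add_div, le_div_iff₀' hlam]
    linarith [hf.mul_abs_deriv_deriv_le hu (hsub hr), mul_le_mul_of_nonneg_left hquot hLn.le]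
  have hderiv : ∀ r ∈ Ico (1 / 2 : ℝ) 1, HasDerivAt (deriv u) (deriv (deriv u) r) r :=
    fun r hr => ((hu.contDiffOn.deriv_of_isOpen isOpen_Ioo one_add_one_eq_two.le).differentiableOn
      one_ne_zero).hasDerivAt (isOpen_Ioo.mem_nhds (hsub hr))
  refine ⟨gronwallBound ‖deriv u (1 / 2)‖ (2 * (Lam * n) / lam) (C / lam) (1 - 1 / 2),
    fun r hr => ?_⟩
  have hIcc : ∀ x ∈ Icc (1 / 2) r, x ∈ Ico (1 / 2 : ℝ) 1 := fun x hx => ⟨hx.1, hx.2.trans_lt hr.2⟩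
  refine (norm_le_gronwallBound_of_norm_deriv_right_le
    (fun x hx => (hderiv x (hIcc x hx)).continuousAt.continuousWithinAt)
    (fun x hx => (hderiv x (hIcc x (Ico_subset_Icc_self hx))).hasDerivWithinAt) le_rfl
    (fun x hx => hsecond x (hIcc x (Ico_subset_Icc_self hx))) r (right_mem_Icc.2 hr.1)).trans ?_
  exact gronwallBound_mono (norm_nonneg _) (by positivity) (by positivity)
    (sub_le_sub_right hr.2.le _)

theorem abs_mul_deriv_deriv_sub_le (hf : RadiallyElliptic f lam Lam n)
    (hu : IsPosSolution f w μ u) (hv : IsPosSolution f w μ v) (hr : r ∈ Ioo (0 : ℝ) 1) :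
    |deriv (deriv u) r * v r - u r * deriv (deriv v) r| ≤
      Lam * n / lam / r * |wronskian u v r| := by
  have heq : f (deriv (deriv u) r * v r) (v r * (deriv u r / r)) =
      f (u r * deriv (deriv v) r) (u r * (deriv v r / r)) := by
    rw [mul_comm (deriv (deriv u) r), hf.homogeneous _ _ _ (hv.pos r hr),
      hf.homogeneous _ _ _ (hu.pos r hr)]
    linear_combination v r * hu.eq r hr - u r * hv.eq r hr
  have hquot : v r * (deriv u r / r) - u r * (deriv v r / r) = wronskian u v r / r := by
    rw [wronskian]
    ring
  have hell := hf.mul_abs_sub_le (deriv (deriv u) r * v r) (u r * deriv (deriv v) r)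
    (v r * (deriv u r / r)) (u r * (deriv v r / r))
  rw [heq, sub_self, abs_zero, zero_add, hquot, abs_div, abs_of_pos hr.1] at hell
  rw [← le_div_iff₀' hf.lam_pos] at hell
  exact hell.trans_eq (by ring)

theorem tendsto_wronskian (hf : RadiallyElliptic f lam Lam n)
    (hu : IsPosSolution f w μ u) (hv : IsPosSolution f w μ v) (hw : ContinuousOn w (Ioc 0 1))
    (hucont : ContinuousOn u (Ioc 0 1)) (hvcont : ContinuousOn v (Ioc 0 1)) (hu1 : u 1 = 0)
    (hv1 : v 1 = 0) : Tendsto (wronskian u v) (nhdsWithin 1 (Iio 1)) (nhds 0) := by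
  obtain ⟨B, hB⟩ := hf.exists_forall_abs_deriv_le hu hw hucont
  obtain ⟨B', hB'⟩ := hf.exists_forall_abs_deriv_le hv hw hvcont
  have hlim : ∀ {g : ℝ → ℝ}, ContinuousOn g (Ioc 0 1) → g 1 = 0 →
      Tendsto (fun r => |g r|) (nhdsWithin 1 (Iio 1)) (nhds 0) := fun hg hg1 => by
    have := (hg 1 ⟨one_pos, le_rfl⟩).tendsto.abs
    rw [hg1, abs_zero] at this
    exact this.mono_left
      (nhdsWithin_le_iff.2 (mem_of_superset (Ioo_mem_nhdsLT one_pos) Ioo_subset_Ioc_self))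
  have hbound := ((hlim hvcont hv1).const_mul B).add ((hlim hucont hu1).mul_const B')
  rw [mul_zero, zero_mul, add_zero] at hbound
  refine squeeze_zero_norm' ?_ hbound
  filter_upwards [Ico_mem_nhdsLT (by norm_num : (1 / 2 : ℝ) < 1)] with r hr
  calc |wronskian u v r| ≤ |deriv u r * v r| + |u r * deriv v r| := abs_sub _ _
    _ = |deriv u r| * |v r| + |u r| * |deriv v r| := by rw [abs_mul, abs_mul]
    _ ≤ B * |v r| + |u r| * B' := by gcongr; exacts [hB r hr, hB' r hr]

theorem wronskian_eq_zero (hf : RadiallyElliptic f lam Lam n)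
    (hu : IsPosSolution f w μ u) (hv : IsPosSolution f w μ v) (hw : ContinuousOn w (Ioc 0 1))
    (hucont : ContinuousOn u (Ioc 0 1)) (hvcont : ContinuousOn v (Ioc 0 1)) (hu1 : u 1 = 0)
    (hv1 : v 1 = 0) (hr : r ∈ Ioo (0 : ℝ) 1) : wronskian u v r = 0 := by
  have hsub : ∀ x ∈ Ico r 1, x ∈ Ioo (0 : ℝ) 1 := fun x hx => ⟨hr.1.trans_le hx.1, hx.2⟩
  refine eq_zero_of_norm_deriv_le_of_tendsto_zero (K := Lam * n / lam / r) hr.2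
    (fun x hx => hasDerivAt_wronskian isOpen_Ioo hu.contDiffOn hv.contDiffOn (hsub x hx))
    (fun x hx => (hf.abs_mul_deriv_deriv_sub_le hu hv (hsub x hx)).trans ?_)
    (hf.tendsto_wronskian hu hv hw hucont hvcont hu1 hv1)
  have := hf.lam_pos
  have := hf.Lam_pos
  have := hf.mult_pos
  rw [Real.norm_eq_abs]
  gcongr
  exacts [hr.1, hx.1]

end RadiallyElliptic

theorem IsPosSolution.exists_pos_forall_eq_mul (hf : RadiallyElliptic f lam Lam n)
    (hu : IsPosSolution f w μ u) (hv : IsPosSolution f w μ v) (hw : ContinuousOn w (Ioc 0 1))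
    (hucont : ContinuousOn u (Ioc 0 1)) (hvcont : ContinuousOn v (Ioc 0 1)) (hu1 : u 1 = 0)
    (hv1 : v 1 = 0) : ∃ t, 0 < t ∧ ∀ r ∈ Ioo (0 : ℝ) 1, u r = t * v r :=
  exists_pos_forall_eq_mul_of_wronskian_eq_zero isOpen_Ioo isPreconnected_Ioo
    (nonempty_Ioo.2 one_pos) (hu.contDiffOn.differentiableOn two_ne_zero)
    (hv.contDiffOn.differentiableOn two_ne_zero) hu.pos hv.pos
    fun _ hr => hf.wronskian_eq_zero hu hv hw hucont hvcont hu1 hv1 hr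

theorem stmt15_general (hf : RadiallyElliptic f lam Lam n) :
    (∀ γ : ℝ, γ < 2 → 2 < lam / Lam * n + 1 → ∀ u, IsPosSolution f (fun r => r ^ (-γ))
        (sSup (supersolutionLevels f fun r => r ^ (-γ))) u →
      ContinuousOn u (Ioc 0 1) → ∃ C, ∀ r ∈ Ioo (0 : ℝ) 1, |u r| ≤ C) ∧
    ∀ (w : ℝ → ℝ) (μ : ℝ), ContinuousOn w (Ioc 0 1) → ∀ u v,
      IsPosSolution f w μ u → ContinuousOn u (Ioc 0 1) → u 1 = 0 →
      IsPosSolution f w μ v → ContinuousOn v (Ioc 0 1) → v 1 = 0 →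
      ∃ t, 0 < t ∧ ∀ r ∈ Ioo (0 : ℝ) 1, u r = t * v r :=
  ⟨fun _ hγ hgap _ hu hcont =>
      hu.exists_forall_abs_le hf (hf.two_lt_div_mul_add_one_iff.1 hgap) hγ hcont,
    fun _ _ hw _ _ hu hucont hu1 hv hvcont hv1 =>
      hu.exists_pos_forall_eq_mul hf hv hw hucont hvcont hu1 hv1⟩

end Simplicity

theorem stmt15 (N : ℕ) (hN : 2 ≤ N) (lam Lam : ℝ) (hlam : 0 < lam) (hlL : lam ≤ Lam)
    (hNp : 2 < lam / Lam * ((N : ℝ) - 1) + 1)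
    (F : Matrix (Fin N) (Fin N) ℝ → ℝ)
    (hF1 : UnifElliptic N lam Lam F) (hF2 : RotInvariant N F) (hF3 : PosHomog N F)
    (γ : ℝ) (hγ0 : 0 < γ) (hγ2 : γ < 2) :
    (∀ u : ℝ → ℝ,
      (ContDiffOn ℝ 2 u (Ioo 0 1) ∧ (∀ r ∈ Ioo (0:ℝ) 1, 0 < u r) ∧
        ContinuousOn u (Ioc 0 1) ∧ u 1 = 0 ∧
        (∀ r ∈ Ioo (0:ℝ) 1,
          F (Dmat N (deriv (deriv u) r) (deriv u r / r))
            + radialEV N F γ * u r * r ^ (-γ) = 0)) →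
      ∃ C : ℝ, ∀ r ∈ Ioo (0:ℝ) 1, |u r| ≤ C) ∧
    (∀ u v : ℝ → ℝ,
      (ContDiffOn ℝ 2 u (Ioo 0 1) ∧ (∀ r ∈ Ioo (0:ℝ) 1, 0 < u r) ∧
        ContinuousOn u (Ioc 0 1) ∧ u 1 = 0 ∧
        (∀ r ∈ Ioo (0:ℝ) 1,
          F (Dmat N (deriv (deriv u) r) (deriv u r / r))
            + radialEV N F γ * u r * r ^ (-γ) = 0)) →
      (ContDiffOn ℝ 2 v (Ioo 0 1) ∧ (∀ r ∈ Ioo (0:ℝ) 1, 0 < v r) ∧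
        ContinuousOn v (Ioc 0 1) ∧ v 1 = 0 ∧
        (∀ r ∈ Ioo (0:ℝ) 1,
          F (Dmat N (deriv (deriv v) r) (deriv v r / r))
            + radialEV N F γ * v r * r ^ (-γ) = 0)) →
      ∃ t : ℝ, 0 < t ∧ ∀ r ∈ Ioo (0:ℝ) 1, u r = t * v r) := by
  have h := stmt15_general (hF1.radiallyElliptic hF3 hN hlam)
  exact ⟨fun u ⟨hu, hpos, hcont, _, heq⟩ => h.1 γ hγ2 hNp u ⟨hu, hpos, heq⟩ hcont,
    fun u v ⟨hu, hupos, hucont, hu1, hueq⟩ ⟨hv, hvpos, hvcont, hv1, hveq⟩ =>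
      h.2 _ _ (continuousOn_id.rpow_const fun r hr => Or.inl hr.1.ne') u v
        ⟨hu, hupos, hueq⟩ hucont hu1 ⟨hv, hvpos, hveq⟩ hvcont hv1⟩

end
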